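/- arXiv:2601.22649 — 2 statements merged into one kernel-verified Lean document; each statement's English description precedes it below -/
import Mathlib

section
/- For n ≥ 1, the number of thick subcategories of the category of contravariant representations of {1,…,n} over F₂ with finite-dimensional values equals the (n+1)-th Catalan number C_{n+1} = (1/(n+2))·binom(2n+2, n+1). -/
/-!
The thick subcategories are in bijection with the noncrossing partitions of `{0, …, n}`, which are
counted by the Catalan number `C_{n+1}`.

Indices run over `0, …, n - 1`. For `0 ≤ a < b ≤ n` let `M[a, b)` be the interval module supported
on the indices `i` with `a ≤ i < b`. To a thick subcategory `S` is attached the relation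
`arcs S a b`, expressing that `M[a, b)` lies in `S`.

* It is a noncrossing partition of `{0, …, n}` (`isNC_arcs`). For `a ≤ b ≤ c ≤ d` the canonical
  morphism `M[a, c) ⟶ M[b, d)` has kernel `M[a, b)` and cokernel `M[c, d)`, and `M[a, c)` is an
  extension of `M[b, c)` by `M[a, b)`.
* It determines `S` (`arcs_injective`), since every representation is a direct sum of interval
  modules: a nonzero representation splits off an interval module (`exists_split`).
* Every noncrossing partition `T` occurs (`arcs_thickOf`). The gaps between consecutive points of
  `{0, …, n}` are the indices, and `thickOf n T` consists of the representations that vanish at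
  every gap under no arc of `T` and whose structure maps between gaps under the same arcs are
  bijective. These conditions define a thick subcategory by the five lemma, so no decomposition into
  intervals is needed for the closure properties. An interval module satisfying them belongs to an
  arc of `T` because the convex hull of a block is a union of blocks (`IsNC.exists_hull`): the gaps
  at its two ends are under the same arcs, and such pairs of gaps separate all non-arcs
  (`IsNC.of_not_separated`).

Noncrossing partitions are counted by the Catalan recursion, obtained by cutting a partition after
the largest element of the block of its first point (`card_NC`).
-/

open CategoryTheory CategoryTheory.Limits

noncomputable section

abbrev F2 : Type := ZMod 2

/-- The abelian category of contravariant representations of `{1,…,n}` over `F₂`. -/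
abbrev RepCat (n : ℕ) := (Fin n)ᵒᵖ ⥤ ModuleCat.{0} F2

/-- Representations all of whose values are finite dimensional. -/
def FinDimRep (n : ℕ) := {X : RepCat n // ∀ i : (Fin n)ᵒᵖ, FiniteDimensional F2 (X.obj i)}

variable {n : ℕ}

/-- The class `S` is closed under isomorphism. -/
def IsoClosed (S : Set (FinDimRep n)) : Prop :=
  ∀ X Y : FinDimRep n, Nonempty (X.1 ≅ Y.1) → X ∈ S → Y ∈ S

/-- The class `S` contains the zero object. -/
def ContainsZero (S : Set (FinDimRep n)) : Prop :=
  ∀ X : FinDimRep n, IsZero X.1 → X ∈ S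

/-- The class `S` is closed under finite direct sums. -/
def SumClosed (S : Set (FinDimRep n)) : Prop :=
  ∀ X Y Z : FinDimRep n, X ∈ S → Y ∈ S → Nonempty (Z.1 ≅ X.1 ⊞ Y.1) → Z ∈ S

/-- The class `S` is closed under direct summands. -/
def SummandClosed (S : Set (FinDimRep n)) : Prop :=
  ∀ X Y Z : FinDimRep n, Z ∈ S → Nonempty (Z.1 ≅ X.1 ⊞ Y.1) → X ∈ S ∧ Y ∈ S

/-- The class `S` is closed under subobjects. -/
def SubClosed (S : Set (FinDimRep n)) : Prop :=
  ∀ X Y : FinDimRep n, Y ∈ S → (∃ f : X.1 ⟶ Y.1, Mono f) → X ∈ S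

/-- The class `S` is closed under quotient objects. -/
def QuotClosed (S : Set (FinDimRep n)) : Prop :=
  ∀ X Y : FinDimRep n, X ∈ S → (∃ f : X.1 ⟶ Y.1, Epi f) → Y ∈ S

/-- The class `S` is closed under extensions: the middle term of a short exact
sequence whose outer terms lie in `S` again lies in `S`. -/
def ExtClosed (S : Set (FinDimRep n)) : Prop :=
  ∀ X Y Z : FinDimRep n, X ∈ S → Z ∈ S →
    (∃ (f : X.1 ⟶ Y.1) (g : Y.1 ⟶ Z.1) (w : f ≫ g = 0),
      (ShortComplex.mk f g w).ShortExact) → Y ∈ S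

/-- The class `S` is closed under kernels of morphisms between its objects. -/
def KerClosed (S : Set (FinDimRep n)) : Prop :=
  ∀ X Y K : FinDimRep n, X ∈ S → Y ∈ S →
    (∃ f : X.1 ⟶ Y.1, Nonempty (K.1 ≅ kernel f)) → K ∈ S

/-- The class `S` is closed under cokernels of morphisms between its objects. -/
def CokerClosed (S : Set (FinDimRep n)) : Prop :=
  ∀ X Y C : FinDimRep n, X ∈ S → Y ∈ S →
    (∃ f : X.1 ⟶ Y.1, Nonempty (C.1 ≅ cokernel f)) → C ∈ S

/-! ### Counting noncrossing partitions -/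

/-- The noncrossing partitions of `[l, r) ⊆ ℕ`, each encoded by its relation
`T a b` expressing that `a < b` lie in the same block. The fields `trans`, `left` and `right` say
that lying in the same block is an equivalence relation, and `cross` that two crossing arcs belong
to the same block. -/
structure IsNC (l r : ℕ) (T : ℕ → ℕ → Prop) : Prop where
  bound : ∀ {a b}, T a b → l ≤ a ∧ a < b ∧ b < r
  trans : ∀ {a b c}, T a b → T b c → T a c
  left : ∀ {a b c}, T a b → T a c → b < c → T b c
  right : ∀ {a b c}, T a c → T b c → a < b → T a b
  cross : ∀ {a b c d}, T a c → T b d → a < b → b < c → c < d → T a b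

/-- The relation of the partition of `[l, r)` assembled from partitions `T₁` of `[l + 1, k]` and
`T₂` of `[k + 1, r)` by adding `l` to the block of `k` (to a block of its own if `k = l`). -/
def glue (l k : ℕ) (T₁ T₂ : ℕ → ℕ → Prop) (a b : ℕ) : Prop :=
  T₁ a b ∨ T₂ a b ∨ (a = l ∧ l < b ∧ (b = k ∨ T₁ b k))

theorem isNC_glue {l k r : ℕ} (hk : k < r) (hlk : l ≤ k) {T₁ T₂ : ℕ → ℕ → Prop}
    (h₁ : IsNC (l + 1) (k + 1) T₁) (h₂ : IsNC (k + 1) r T₂) : IsNC l r (glue l k T₁ T₂) := by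
  obtain ⟨b₁, t₁, l₁, r₁, c₁⟩ := h₁
  obtain ⟨b₂, t₂, l₂, r₂, c₂⟩ := h₂
  constructor
  · rintro a b (h | h | ⟨rfl, h, rfl | h'⟩)
    · have := b₁ h; omega
    · have := b₂ h; omega
    · omega
    · have := b₁ h'; omega
  · unfold glue; grind
  · unfold glue; grind
  · unfold glue; grind
  · unfold glue; grind

/-- Every noncrossing partition arises by `glue`, with `k` the largest element of the block
of `l`. -/
theorem exists_glue {l r : ℕ} (hlr : l < r) {T : ℕ → ℕ → Prop} (h : IsNC l r T) :
    ∃ k, l ≤ k ∧ k < r ∧ ∃ T₁ T₂, IsNC (l + 1) (k + 1) T₁ ∧ IsNC (k + 1) r T₂ ∧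
      glue l k T₁ T₂ = T := by
  classical
  obtain ⟨bd, tr, lf, rt, cr⟩ := h
  have hs : ∃ k, (k = l ∨ T l k) ∧ ∀ b, T l b → b ≤ k := by
    have hex : ∃ k, k ≤ r ∧ (k = l ∨ T l k) := ⟨l, hlr.le, Or.inl rfl⟩
    refine ⟨Nat.findGreatest (fun k => k = l ∨ T l k) r,
      Nat.findGreatest_spec (P := fun k => k = l ∨ T l k) hlr.le (Or.inl rfl), fun b hb => ?_⟩
    exact Nat.le_findGreatest (bd hb).2.2.le (Or.inr hb)
  obtain ⟨k, hk, hmax⟩ := hs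
  have hlk : l ≤ k := by grind
  refine ⟨k, hlk, by grind, fun a b => T a b ∧ l < a ∧ b ≤ k, fun a b => T a b ∧ k < a,
    ⟨?_, ?_, ?_, ?_, ?_⟩, ⟨?_, ?_, ?_, ?_, ?_⟩, ?_⟩
  · grind
  · grind
  · grind
  · grind
  · grind
  · grind
  · grind
  · grind
  · grind
  · grind
  · funext a b
    apply propext
    unfold glue
    constructor
    · grind
    · intro hab
      have := bd hab
      by_cases h1 : a = l
      · subst h1; grind
      · by_cases h2 : k < a
        · grind
        · by_cases h3 : b ≤ k
          · grind
          · exfalso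
            -- the arc from `a ≤ k` to `b > k` crosses the arc from `l` to `k`
            rcases hk with hk | hk
            · omega
            · by_cases h4 : a = k
              · have := hmax b (tr hk (h4 ▸ hab)); omega
              · have h5 := cr hk hab (by omega) (by omega) (by omega)
                have := hmax b (tr h5 hab); omega

theorem glue_injective {l k k' r : ℕ} {T₁ T₂ T₁' T₂' : ℕ → ℕ → Prop} (hlk : l ≤ k) (hlk' : l ≤ k')
    (h₁ : IsNC (l + 1) (k + 1) T₁) (h₂ : IsNC (k + 1) r T₂)
    (h₁' : IsNC (l + 1) (k' + 1) T₁') (h₂' : IsNC (k' + 1) r T₂')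
    (h : glue l k T₁ T₂ = glue l k' T₁' T₂') : k = k' ∧ T₁ = T₁' ∧ T₂ = T₂' := by
  have key : ∀ a b, glue l k T₁ T₂ a b ↔ glue l k' T₁' T₂' a b := fun a b => by rw [h]
  have b₁ := @h₁.bound
  have b₂ := @h₂.bound
  have b₁' := @h₁'.bound
  have b₂' := @h₂'.bound
  clear h h₁ h₂ h₁' h₂'
  unfold glue at key
  have hk : k = k' := by
    have e1 := key l k
    have e2 := key l k'
    grind
  subst hk
  refine ⟨rfl, ?_, ?_⟩
  · funext a b
    have := key a b
    grind
  · funext a b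
    have := key a b
    grind

/-- Noncrossing partitions are counted by the Catalan numbers: summing over the largest element of
the block of `l` gives the Catalan recursion. -/
theorem card_NC (m : ℕ) : ∀ l r, r - l = m →
    Finite {T // IsNC l r T} ∧ Nat.card {T // IsNC l r T} = catalan m := by
  induction m using Nat.strong_induction_on with
  | _ m ih =>
    intro l r hm
    rcases m with _ | m
    · have : Unique {T // IsNC l r T} :=
        { default := ⟨fun _ _ => False, by constructor <;> simp⟩
          uniq := by
            rintro ⟨T, hT⟩
            ext a b
            have := @hT.bound a b
            grind }
      exact ⟨inferInstance, by simp⟩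
    · let A : Fin (m + 1) → Type := fun i =>
        {T // IsNC (l + 1) (l + i + 1) T} × {T // IsNC (l + i + 1) r T}
      have h1 (i : Fin (m + 1)) := ih i (by omega) (l + 1) (l + i + 1) (by omega)
      have h2 (i : Fin (m + 1)) := ih (m - i) (by omega) (l + i + 1) r (by omega)
      have hfin : ∀ i, Finite (A i) := fun i => by
        have := (h1 i).1
        have := (h2 i).1
        infer_instance
      let F : (Σ i, A i) → {T // IsNC l r T} := fun x =>
        ⟨glue l (l + x.1) x.2.1.1 x.2.2.1,
          isNC_glue (by omega) (by omega) x.2.1.2 x.2.2.2⟩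
      have hF : Function.Bijective F := by
        constructor
        · rintro ⟨i, ⟨T₁, h₁⟩, ⟨T₂, h₂⟩⟩ ⟨i', ⟨T₁', h₁'⟩, ⟨T₂', h₂'⟩⟩ h
          obtain ⟨e, rfl, rfl⟩ := glue_injective (by omega) (by omega) h₁ h₂ h₁' h₂'
            (congrArg Subtype.val h)
          obtain rfl : i = i' := by ext; omega
          rfl
        · rintro ⟨T, hT⟩
          obtain ⟨k, hlk, hkr, T₁, T₂, h₁, h₂, rfl⟩ := exists_glue (by omega) hT
          obtain ⟨i, rfl⟩ := Nat.exists_eq_add_of_le hlk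
          exact ⟨⟨⟨i, by omega⟩, ⟨T₁, h₁⟩, ⟨T₂, h₂⟩⟩, rfl⟩
      refine ⟨Finite.of_surjective F hF.2, ?_⟩
      rw [← Nat.card_congr (Equiv.ofBijective F hF), Nat.card_sigma, catalan_succ]
      refine Finset.sum_congr rfl fun i _ => ?_
      rw [Nat.card_prod, (h1 i).2, (h2 i).2]

/-! ### Thick subcategories and pointwise exactness -/

/-- `S` is a thick subcategory. -/
def IsThick (S : Set (FinDimRep n)) : Prop :=
  IsoClosed S ∧ ContainsZero S ∧ SumClosed S ∧ SummandClosed S ∧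
    KerClosed S ∧ CokerClosed S ∧ ExtClosed S

/-- Isomorphisms, hence also exactness, are detected at each index. -/
theorem jointlyReflect_evaluation (n : ℕ) :
    JointlyReflectIsomorphisms
      (fun i : (Fin n)ᵒᵖ => (evaluation (Fin n)ᵒᵖ (ModuleCat.{0} F2)).obj i) where
  isIso f h := by
    have : ∀ i, IsIso (f.app i) := h
    exact NatIso.isIso_of_isIso_app f

theorem exact_iff_app {X Y Z : RepCat n} (f : X ⟶ Y) (g : Y ⟶ Z) (w : f ≫ g = 0) :
    (ShortComplex.mk f g w).Exact ↔
      ∀ i, Function.Exact (f.app i).hom (g.app i).hom := by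
  rw [(jointlyReflect_evaluation n).exact_iff]
  exact forall_congr' fun i =>
    ShortComplex.ShortExact.moduleCat_exact_iff_function_exact _

theorem mono_iff_injective_app {X Y : RepCat n} (f : X ⟶ Y) :
    Mono f ↔ ∀ i, Function.Injective (f.app i).hom := by
  rw [NatTrans.mono_iff_mono_app]
  exact forall_congr' fun i => ModuleCat.mono_iff_injective _

theorem epi_iff_surjective_app {X Y : RepCat n} (f : X ⟶ Y) :
    Epi f ↔ ∀ i, Function.Surjective (f.app i).hom := by
  rw [NatTrans.epi_iff_epi_app]
  exact forall_congr' fun i => ModuleCat.epi_iff_surjective _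

theorem naturality_hom {X Y : RepCat n} (f : X ⟶ Y) {i j : (Fin n)ᵒᵖ} (u : i ⟶ j) :
    (f.app j).hom ∘ₗ (X.map u).hom = (Y.map u).hom ∘ₗ (f.app i).hom :=
  ModuleCat.hom_ext_iff.1 (f.naturality u)

theorem exact_hom_of_exact {X Y Z : RepCat n} {f : X ⟶ Y} {g : Y ⟶ Z} {w : f ≫ g = 0}
    (h : (ShortComplex.mk f g w).Exact) (i : (Fin n)ᵒᵖ) :
    Function.Exact (f.app i).hom (g.app i).hom :=
  (exact_iff_app f g w).1 h i

theorem exists_exact_of_iso_kernel {K X Y : RepCat n} {f : X ⟶ Y} (e : K ≅ kernel f) :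
    ∃ g : K ⟶ X, (∀ i, Function.Injective (g.app i).hom) ∧
      ∀ i, Function.Exact (g.app i).hom (f.app i).hom := by
  have w : (e.hom ≫ kernel.ι f) ≫ f = 0 := by simp
  refine ⟨e.hom ≫ kernel.ι f, (mono_iff_injective_app _).1 inferInstance,
    (exact_iff_app _ _ w).1 (ShortComplex.exact_of_f_is_kernel _ ?_)⟩
  exact IsKernel.isoKernel _ _ (kernelIsKernel f) e rfl

theorem exists_exact_of_iso_cokernel {X Y C : RepCat n} {f : X ⟶ Y} (e : C ≅ cokernel f) :
    ∃ g : Y ⟶ C, (∀ i, Function.Surjective (g.app i).hom) ∧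
      ∀ i, Function.Exact (f.app i).hom (g.app i).hom := by
  have w : f ≫ (cokernel.π f ≫ e.inv) = 0 := by simp
  refine ⟨cokernel.π f ≫ e.inv, (epi_iff_surjective_app _).1 inferInstance,
    (exact_iff_app _ _ w).1 (ShortComplex.exact_of_g_is_cokernel _ ?_)⟩
  exact IsCokernel.cokernelIso _ _ (cokernelIsCokernel f) e.symm rfl

/-- A criterion for thickness in terms of pointwise exact sequences. Closure under direct sums is a
case of closure under extensions, and closure under isomorphisms and under summands are both cases
of closure under retracts. -/
theorem isThick_of_exact {S : Set (FinDimRep n)}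
    (hzero : ∀ X : FinDimRep n, (∀ i, Subsingleton (X.1.obj i)) → X ∈ S)
    (hretract : ∀ (X Z : FinDimRep n) (s : X.1 ⟶ Z.1) (r : Z.1 ⟶ X.1), s ≫ r = 𝟙 X.1 →
      Z ∈ S → X ∈ S)
    (hker : ∀ (K X Y : FinDimRep n) (f : K.1 ⟶ X.1) (g : X.1 ⟶ Y.1),
      (∀ i, Function.Injective (f.app i).hom) →
      (∀ i, Function.Exact (f.app i).hom (g.app i).hom) → X ∈ S → Y ∈ S → K ∈ S)
    (hcoker : ∀ (X Y C : FinDimRep n) (f : X.1 ⟶ Y.1) (g : Y.1 ⟶ C.1),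
      (∀ i, Function.Surjective (g.app i).hom) →
      (∀ i, Function.Exact (f.app i).hom (g.app i).hom) → X ∈ S → Y ∈ S → C ∈ S)
    (hext : ∀ (X Y Z : FinDimRep n) (f : X.1 ⟶ Y.1) (g : Y.1 ⟶ Z.1),
      (∀ i, Function.Injective (f.app i).hom) → (∀ i, Function.Surjective (g.app i).hom) →
      (∀ i, Function.Exact (f.app i).hom (g.app i).hom) → X ∈ S → Z ∈ S → Y ∈ S) :
    IsThick S := by
  have hiso : IsoClosed S := fun X Y ⟨e⟩ hX => hretract Y X e.inv e.hom (by simp) hX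
  have hext' : ExtClosed S := by
    rintro X Y Z hX hZ ⟨f, g, w, h⟩
    have := h.mono_f
    have := h.epi_g
    exact hext X Y Z f g ((mono_iff_injective_app f).1 h.mono_f)
      ((epi_iff_surjective_app g).1 h.epi_g) (exact_hom_of_exact h.exact) hX hZ
  refine ⟨hiso, ?_, ?_, ?_, ?_, ?_, hext'⟩
  · intro X hX
    exact hzero X fun i => ModuleCat.subsingleton_of_isZero
      (((evaluation (Fin n)ᵒᵖ (ModuleCat.{0} F2)).obj i).map_isZero hX)
  · rintro X Y Z hX hY ⟨e⟩
    refine hext' X Z Y hX hY ⟨biprod.inl ≫ e.inv, e.hom ≫ biprod.snd, by simp, ?_⟩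
    let s : (ShortComplex.mk (biprod.inl ≫ e.inv) (e.hom ≫ biprod.snd)
        (by simp : (biprod.inl ≫ e.inv) ≫ (e.hom ≫ biprod.snd : Z.1 ⟶ Y.1) = 0)).Splitting :=
      { r := e.hom ≫ biprod.fst
        s := biprod.inr ≫ e.inv
        id := by
          have := congrArg (fun t => e.hom ≫ t ≫ e.inv) (biprod.total (X := X.1) (Y := Y.1))
          simpa only [Preadditive.add_comp, Preadditive.comp_add, Category.assoc,
            Category.id_comp, Iso.hom_inv_id] using this }
    exact s.shortExact
  · rintro X Y Z hZ ⟨e⟩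
    exact ⟨hretract X Z (biprod.inl ≫ e.inv) (e.hom ≫ biprod.fst) (by simp) hZ,
      hretract Y Z (biprod.inr ≫ e.inv) (e.hom ≫ biprod.snd) (by simp) hZ⟩
  · rintro X Y K hX hY ⟨f, ⟨e⟩⟩
    obtain ⟨g, hg, hgf⟩ := exists_exact_of_iso_kernel e
    exact hker K X Y g f hg hgf hX hY
  · rintro X Y C hX hY ⟨f, ⟨e⟩⟩
    obtain ⟨g, hg, hgf⟩ := exists_exact_of_iso_cokernel e
    exact hcoker X Y C f g hg hgf hX hY

theorem isThick_zeroAt (i : (Fin n)ᵒᵖ) :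
    IsThick {X : FinDimRep n | Subsingleton (X.1.obj i)} := by
  refine isThick_of_exact ?_ ?_ ?_ ?_ ?_
  · intro X h
    exact h i
  · intro X Z s r hsr (hZ : Subsingleton _)
    have h : ∀ x, (r.app i).hom ((s.app i).hom x) = x := fun x => by
      have := congrArg (fun t : X.1 ⟶ X.1 => (t.app i).hom x) hsr
      simpa using this
    exact (Function.LeftInverse.injective h).subsingleton
  · intro K X Y f g hf _ (hX : Subsingleton _) _
    exact (hf i).subsingleton
  · intro X Y C f g hg _ _ (hY : Subsingleton _)
    exact (hg i).subsingleton
  · intro X Y Z f g hf hg hfg (hX : Subsingleton _) (hZ : Subsingleton _)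
    have h0 : ∀ y : Y.1.obj i, y = 0 := fun y => by
      obtain ⟨x, rfl⟩ := (hfg i y).1 (Subsingleton.elim _ _)
      rw [Subsingleton.elim x 0, map_zero]
    exact ⟨fun y y' => (h0 y).trans (h0 y').symm⟩

/-- Bijectivity of a structure map is a thick condition, by the five lemma. -/
theorem isThick_isoAt {i j : (Fin n)ᵒᵖ} (u : i ⟶ j) :
    IsThick {X : FinDimRep n | Function.Bijective (X.1.map u).hom} := by
  refine isThick_of_exact ?_ ?_ ?_ ?_ ?_
  · intro X h
    have := h i
    have := h j
    exact ⟨fun _ _ _ => Subsingleton.elim _ _, fun _ => ⟨0, Subsingleton.elim _ _⟩⟩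
  · intro X Z s r hsr (hZ : Function.Bijective _)
    have h : ∀ k x, (r.app k).hom ((s.app k).hom x) = x := fun k x => by
      have := congrArg (fun t : X.1 ⟶ X.1 => (t.app k).hom x) hsr
      simpa using this
    have hs := fun x => LinearMap.congr_fun (naturality_hom s u) x
    have hr := fun x => LinearMap.congr_fun (naturality_hom r u) x
    simp only [LinearMap.comp_apply] at hs hr
    constructor
    · intro x x' hx
      rw [← h i x, ← h i x']
      congr 1
      apply hZ.1
      rw [← hs, ← hs, hx]
    · intro y
      obtain ⟨z, hz⟩ := hZ.2 ((s.app j).hom y)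
      exact ⟨(r.app i).hom z, by rw [← hr, hz, h]⟩
  · intro K X Y f g hf hfg (hX : Function.Bijective _) (hY : Function.Bijective _)
    exact LinearMap.bijective_of_surjective_of_bijective_of_bijective_of_injective
      (R := F2) (M₁ := PUnit.{1}) (M₂ := PUnit.{1}) (N₁ := PUnit.{1}) (N₂ := PUnit.{1})
      0 0 (f.app i).hom (g.app i).hom 0 0 (f.app j).hom (g.app j).hom
      0 0 _ (X.1.map u).hom (Y.1.map u).hom (by simp) (by simp)
      (naturality_hom f u) (naturality_hom g u)
      (fun x => by simp)
      (fun x => by simp [map_eq_zero_iff _ (hf i), eq_comm])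
      (hfg i)
      (fun x => by simp)
      (fun x => by simp [map_eq_zero_iff _ (hf j), eq_comm])
      (hfg j) (fun x => ⟨0, rfl⟩) ⟨fun _ _ _ => rfl, fun x => ⟨0, rfl⟩⟩ hX hY.1
  · intro X Y C f g hg hfg (hX : Function.Bijective _) (hY : Function.Bijective _)
    exact LinearMap.bijective_of_surjective_of_bijective_of_bijective_of_injective
      (R := F2) (M₄ := PUnit.{1}) (M₅ := PUnit.{1}) (N₄ := PUnit.{1}) (N₅ := PUnit.{1})
      (f.app i).hom (g.app i).hom 0 0 (f.app j).hom (g.app j).hom 0 0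
      (X.1.map u).hom (Y.1.map u).hom _ 0 0
      (naturality_hom f u) (naturality_hom g u) (by simp) (by simp)
      (hfg i)
      (fun x => by simpa using hg i x)
      (fun x => by simp)
      (hfg j)
      (fun x => by simpa using hg j x)
      (fun x => by simp)
      hX.2 hY ⟨fun _ _ _ => rfl, fun x => ⟨0, rfl⟩⟩ (fun _ _ _ => rfl)
  · intro X Y Z f g hf hg hfg (hX : Function.Bijective _) (hZ : Function.Bijective _)
    exact LinearMap.bijective_of_surjective_of_bijective_of_bijective_of_injective
      (R := F2) (M₁ := PUnit.{1}) (M₅ := PUnit.{1}) (N₁ := PUnit.{1}) (N₅ := PUnit.{1})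
      0 (f.app i).hom (g.app i).hom 0 0 (f.app j).hom (g.app j).hom 0
      0 (X.1.map u).hom _ (Z.1.map u).hom 0
      (by simp) (naturality_hom f u) (naturality_hom g u) (by simp)
      (fun x => by simp [map_eq_zero_iff _ (hf i), eq_comm])
      (hfg i)
      (fun x => by simpa using hg i x)
      (fun x => by simp [map_eq_zero_iff _ (hf j), eq_comm])
      (hfg j)
      (fun x => by simpa using hg j x)
      (fun x => ⟨0, rfl⟩) hX hZ (fun _ _ _ => rfl)

theorem isThick_forall {κ : Sort*} {S : κ → Set (FinDimRep n)} (h : ∀ k, IsThick (S k)) :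
    IsThick {X : FinDimRep n | ∀ k, X ∈ S k} :=
  ⟨fun X Y e hX k => (h k).1 X Y e (hX k),
    fun X hX k => (h k).2.1 X hX,
    fun X Y Z hX hY e k => (h k).2.2.1 X Y Z (hX k) (hY k) e,
    fun X Y Z hZ e => ⟨fun k => ((h k).2.2.2.1 X Y Z (hZ k) e).1,
      fun k => ((h k).2.2.2.1 X Y Z (hZ k) e).2⟩,
    fun X Y K hX hY e k => (h k).2.2.2.2.1 X Y K (hX k) (hY k) e,
    fun X Y C hX hY e k => (h k).2.2.2.2.2.1 X Y C (hX k) (hY k) e,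
    fun X Y Z hX hZ e k => (h k).2.2.2.2.2.2 X Y Z (hX k) (hZ k) e⟩

/-! ### Interval modules -/

/-- The base field `F₂` if `p` holds and zero otherwise, as a subspace of `F₂`. -/
def propSpace (p : Prop) : Submodule F2 F2 where
  carrier := {x | ¬p → x = 0}
  add_mem' hx hy hp := by simp [hx hp, hy hp]
  zero_mem' _ := rfl
  smul_mem' c x hx hp := by simp [hx hp]

open Classical in
/-- The canonical map `propSpace p → propSpace q`: the identity of `F₂` if both `p` and `q` hold,
and zero otherwise. -/
def propMap (p q : Prop) : propSpace p →ₗ[F2] propSpace q where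
  toFun x := ⟨if q then x.1 else 0, fun hq => if_neg hq⟩
  map_add' x y := by ext; by_cases hq : q <;> simp [hq]
  map_smul' c x := by ext; by_cases hq : q <;> simp [hq]

theorem propMap_of_true {p q : Prop} (hq : q) (x : propSpace p) : (propMap p q x).1 = x.1 :=
  if_pos hq

theorem propSpace_eq_zero {p : Prop} (hp : ¬p) (x : propSpace p) : x = 0 :=
  Subtype.ext (x.2 hp)

/-- The unit of `F₂`, as an element of `propSpace p` for a true `p`. -/
def propOne {p : Prop} (hp : p) : propSpace p := ⟨1, fun h => absurd hp h⟩

theorem propOne_ne_zero {p : Prop} (hp : p) : propOne hp ≠ 0 := fun h =>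
  one_ne_zero (α := F2) (congrArg Subtype.val h)

theorem propMap_self (p : Prop) : propMap p p = LinearMap.id := by
  ext x
  by_cases hp : p
  · exact propMap_of_true hp x
  · rw [propSpace_eq_zero hp x, map_zero, map_zero]

theorem propMap_comp {p q r : Prop} (h : p → r → q) :
    propMap q r ∘ₗ propMap p q = propMap p r := by
  refine LinearMap.ext fun x => ?_
  rw [LinearMap.comp_apply]
  by_cases hp : p
  · by_cases hr : r
    · apply Subtype.ext
      rw [propMap_of_true hr, propMap_of_true hr, propMap_of_true (h hp hr)]
    · rw [propSpace_eq_zero hr (propMap q r _), propSpace_eq_zero hr (propMap p r _)]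
  · rw [propSpace_eq_zero hp x, map_zero, map_zero, map_zero]

theorem propMap_injective {p q : Prop} (h : p → q) : Function.Injective (propMap p q) := by
  intro x y hxy
  by_cases hp : p
  · apply Subtype.ext
    rw [← propMap_of_true (h hp) x, ← propMap_of_true (h hp) y, hxy]
  · rw [propSpace_eq_zero hp x, propSpace_eq_zero hp y]

theorem propMap_surjective {p q : Prop} (h : q → p) : Function.Surjective (propMap p q) := by
  intro y
  by_cases hq : q
  · exact ⟨⟨y.1, fun hp => absurd (h hq) hp⟩, Subtype.ext (propMap_of_true hq _)⟩
  · exact ⟨0, by rw [propSpace_eq_zero hq y, map_zero]⟩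

theorem iff_of_propMap_bijective {p q : Prop} (h : Function.Bijective (propMap p q)) :
    p ↔ q := by
  constructor
  · intro hp
    by_contra hq
    refine propOne_ne_zero hp (h.1 ?_)
    rw [propSpace_eq_zero hq (propMap p q _), map_zero]
  · intro hq
    by_contra hp
    obtain ⟨x, hx⟩ := h.2 (propOne hq)
    rw [propSpace_eq_zero hp x, map_zero] at hx
    exact propOne_ne_zero hq hx.symm

theorem propMap_exact {p q r : Prop} (h : q → (p ↔ ¬r)) :
    Function.Exact (propMap p q) (propMap q r) := by
  intro y
  by_cases hq : q
  · by_cases hr : r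
    · have hp : ¬p := fun hp => (h hq).1 hp hr
      constructor
      · intro hy
        exact ⟨0, by rw [map_zero]; exact (propMap_injective (fun _ => hr)
          (hy.trans (map_zero _).symm)).symm⟩
      · rintro ⟨x, rfl⟩
        rw [propSpace_eq_zero hp x, map_zero, map_zero]
    · have hp : p := (h hq).2 hr
      exact ⟨fun _ => propMap_surjective (fun _ => hp) y, fun _ => propSpace_eq_zero hr _⟩
  · rw [propSpace_eq_zero hq y]
    exact ⟨fun _ => ⟨0, map_zero _⟩, fun _ => map_zero _⟩

/-- The index `i` lies in the half-open interval `[a, b)`. -/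
def Mem (a b : ℕ) (i : (Fin n)ᵒᵖ) : Prop := a ≤ i.unop.1 ∧ i.unop.1 < b

theorem val_le_of_hom {i j : (Fin n)ᵒᵖ} (u : i ⟶ j) : j.unop.1 ≤ i.unop.1 :=
  leOfHom u.unop

/-- The interval module `M[a, b)`: it is `F₂` on the indices in `[a, b)` and zero elsewhere, with
identity maps wherever possible. -/
def interval (n a b : ℕ) : RepCat n where
  obj i := ModuleCat.of F2 (propSpace (Mem a b i))
  map {i j} _ := ModuleCat.ofHom (propMap (Mem a b i) (Mem a b j))
  map_id i := by rw [propMap_self]; rfl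
  map_comp {i j k} u v := by
    rw [← ModuleCat.ofHom_comp, propMap_comp]
    have := val_le_of_hom u
    have := val_le_of_hom v
    unfold Mem
    omega

/-- The interval module as a finite-dimensional representation. -/
def intervalRep (n a b : ℕ) : FinDimRep n :=
  ⟨interval n a b, fun i =>
    inferInstanceAs (FiniteDimensional F2 (propSpace (Mem a b i)))⟩

/-- The canonical morphism `M[a, b) ⟶ M[c, d)`, which is the identity of `F₂` on the common
indices. -/
def intervalMap {a b c d : ℕ} (hac : a ≤ c) (hbd : b ≤ d) :
    interval n a b ⟶ interval n c d where
  app i := ModuleCat.ofHom (propMap (Mem a b i) (Mem c d i))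
  naturality i j u := by
    have := val_le_of_hom u
    change ModuleCat.ofHom _ ≫ ModuleCat.ofHom _ = ModuleCat.ofHom _ ≫ ModuleCat.ofHom _
    rw [← ModuleCat.ofHom_comp, ← ModuleCat.ofHom_comp, propMap_comp, propMap_comp]
    all_goals unfold Mem; omega

/-! ### The noncrossing partition of a thick subcategory -/

theorem comp_eq_zero_of_exact {X Y Z : RepCat n} {f : X ⟶ Y} {g : Y ⟶ Z}
    (h : ∀ i, Function.Exact (f.app i).hom (g.app i).hom) : f ≫ g = 0 := by
  ext i x
  exact (h i).apply_apply_eq_zero x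

theorem mem_of_exact_ker {S : Set (FinDimRep n)} (hS : IsThick S) {K X Y : FinDimRep n}
    (f : K.1 ⟶ X.1) (g : X.1 ⟶ Y.1) (hf : ∀ i, Function.Injective (f.app i).hom)
    (h : ∀ i, Function.Exact (f.app i).hom (g.app i).hom) (hX : X ∈ S) (hY : Y ∈ S) : K ∈ S := by
  have w := comp_eq_zero_of_exact h
  have he := (exact_iff_app f g w).2 h
  have : Mono (ShortComplex.mk f g w).f := (mono_iff_injective_app f).2 hf
  exact hS.2.2.2.2.1 X Y K hX hY
    ⟨g, ⟨he.fIsKernel.conePointUniqueUpToIso (limit.isLimit _)⟩⟩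

theorem mem_of_exact_coker {S : Set (FinDimRep n)} (hS : IsThick S) {X Y C : FinDimRep n}
    (f : X.1 ⟶ Y.1) (g : Y.1 ⟶ C.1) (hg : ∀ i, Function.Surjective (g.app i).hom)
    (h : ∀ i, Function.Exact (f.app i).hom (g.app i).hom) (hX : X ∈ S) (hY : Y ∈ S) : C ∈ S := by
  have w := comp_eq_zero_of_exact h
  have he := (exact_iff_app f g w).2 h
  have : Epi (ShortComplex.mk f g w).g := (epi_iff_surjective_app g).2 hg
  exact hS.2.2.2.2.2.1 X Y C hX hY
    ⟨f, ⟨he.gIsCokernel.coconePointUniqueUpToIso (colimit.isColimit _)⟩⟩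

theorem mem_of_exact_ext {S : Set (FinDimRep n)} (hS : IsThick S) {X Y Z : FinDimRep n}
    (f : X.1 ⟶ Y.1) (g : Y.1 ⟶ Z.1) (hf : ∀ i, Function.Injective (f.app i).hom)
    (hg : ∀ i, Function.Surjective (g.app i).hom)
    (h : ∀ i, Function.Exact (f.app i).hom (g.app i).hom) (hX : X ∈ S) (hZ : Z ∈ S) : Y ∈ S := by
  have w := comp_eq_zero_of_exact h
  exact hS.2.2.2.2.2.2 X Y Z hX hZ ⟨f, g, w,
    { exact := (exact_iff_app f g w).2 h
      mono_f := (mono_iff_injective_app f).2 hf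
      epi_g := (epi_iff_surjective_app g).2 hg }⟩

/-- The arcs of a class `S`: the pairs `a < b ≤ n` with `M[a, b)` in `S`. -/
def arcs (S : Set (FinDimRep n)) (a b : ℕ) : Prop := a < b ∧ b ≤ n ∧ intervalRep n a b ∈ S

/-- For `a ≤ b ≤ c ≤ d`, the canonical morphism `M[a, c) ⟶ M[b, d)` has kernel `M[a, b)`. -/
theorem interval_ker_mem {S : Set (FinDimRep n)} (hS : IsThick S) {a b c d : ℕ} (hab : a ≤ b)
    (hbc : b ≤ c) (hcd : c ≤ d) (h₁ : intervalRep n a c ∈ S) (h₂ : intervalRep n b d ∈ S) :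
    intervalRep n a b ∈ S := by
  refine mem_of_exact_ker hS (K := intervalRep n a b) (X := intervalRep n a c)
    (Y := intervalRep n b d) (intervalMap le_rfl hbc) (intervalMap hab hcd)
    (fun i => propMap_injective ?_) (fun i => propMap_exact ?_) h₁ h₂
  all_goals unfold Mem; omega

/-- For `a ≤ b ≤ c ≤ d`, the canonical morphism `M[a, c) ⟶ M[b, d)` has cokernel `M[c, d)`. -/
theorem interval_coker_mem {S : Set (FinDimRep n)} (hS : IsThick S) {a b c d : ℕ} (hab : a ≤ b)
    (hbc : b ≤ c) (hcd : c ≤ d) (h₁ : intervalRep n a c ∈ S) (h₂ : intervalRep n b d ∈ S) :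
    intervalRep n c d ∈ S := by
  refine mem_of_exact_coker hS (X := intervalRep n a c) (Y := intervalRep n b d)
    (C := intervalRep n c d) (intervalMap hab hcd) (intervalMap hbc le_rfl)
    (fun i => propMap_surjective ?_) (fun i => propMap_exact ?_) h₁ h₂
  all_goals unfold Mem; omega

/-- `M[a, c)` is an extension of `M[b, c)` by `M[a, b)`. -/
theorem interval_ext_mem {S : Set (FinDimRep n)} (hS : IsThick S) {a b c : ℕ} (hab : a ≤ b)
    (hbc : b ≤ c) (h₁ : intervalRep n a b ∈ S) (h₂ : intervalRep n b c ∈ S) :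
    intervalRep n a c ∈ S := by
  refine mem_of_exact_ext hS (X := intervalRep n a b) (Y := intervalRep n a c)
    (Z := intervalRep n b c) (intervalMap le_rfl hbc) (intervalMap hab le_rfl)
    (fun i => propMap_injective ?_) (fun i => propMap_surjective ?_)
    (fun i => propMap_exact ?_) h₁ h₂
  all_goals unfold Mem; omega

/-- The arcs of a thick subcategory form a noncrossing partition of `{0, …, n}`. -/
theorem isNC_arcs {S : Set (FinDimRep n)} (hS : IsThick S) : IsNC 0 (n + 1) (arcs S) where
  bound h := ⟨Nat.zero_le _, h.1, Nat.lt_succ_of_le h.2.1⟩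
  trans h h' := ⟨h.1.trans h'.1, h'.2.1, interval_ext_mem hS h.1.le h'.1.le h.2.2 h'.2.2⟩
  left h h' hbc := ⟨hbc, h'.2.1, interval_coker_mem hS le_rfl h.1.le hbc.le h.2.2 h'.2.2⟩
  right h h' hab := ⟨hab, h'.1.le.trans h'.2.1,
    interval_ker_mem hS hab.le h'.1.le le_rfl h.2.2 h'.2.2⟩
  cross h h' hab hbc hcd := ⟨hab, hbc.le.trans h.2.1,
    interval_ker_mem hS hab.le hbc.le hcd.le h.2.2 h'.2.2⟩

/-! ### Hulls of blocks -/

/-- The block of `c` in a noncrossing partition has a convex hull `[m, M]`, and an arc passes over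
the gap after `M` exactly if it passes over the gap before `m`: no arc leaves the hull, since it
would cross an arc of the block. -/
theorem IsNC.exists_hull {l r : ℕ} {T : ℕ → ℕ → Prop} (h : IsNC l r T) (c : ℕ) :
    ∃ m M, m ≤ c ∧ c ≤ M ∧ (m = c ∨ T m c) ∧ (M = c ∨ T c M) ∧
      (∀ x, T c x → x ≤ M) ∧ ∀ x y, T x y → ((x ≤ M ∧ M < y) ↔ (x < m ∧ m ≤ y)) := by
  classical
  obtain ⟨bd, tr, lf, rt, cr⟩ := h
  have hm : ∃ m, (m = c ∨ T m c) ∧ ∀ x, T x c → m ≤ x := by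
    have hex : ∃ m, m = c ∨ T m c := ⟨c, Or.inl rfl⟩
    exact ⟨Nat.find hex, Nat.find_spec hex, fun x hx => Nat.find_min' hex (Or.inr hx)⟩
  have hM : ∃ M, (M = c ∨ T c M) ∧ ∀ x, T c x → x ≤ M := by
    refine ⟨Nat.findGreatest (fun k => k = c ∨ T c k) (max c r),
      Nat.findGreatest_spec (P := fun k => k = c ∨ T c k) (le_max_left c r) (Or.inl rfl),
      fun b hb => ?_⟩
    exact Nat.le_findGreatest ((bd hb).2.2.le.trans (le_max_right c r)) (Or.inr hb)
  obtain ⟨m, hmc, hmin⟩ := hm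
  obtain ⟨M, hMc, hmax⟩ := hM
  refine ⟨m, M, by grind, by grind, hmc, hMc, hmax, fun x y hxy => ⟨fun ⟨h1, h2⟩ => ?_,
    fun ⟨h1, h2⟩ => ?_⟩⟩
  · have := bd hxy
    by_contra hcon
    have hmx : m ≤ x := by grind
    rcases lt_trichotomy x c with hx | hx | hx
    · have hTm : T m c := by grind
      have hxc : T x c := by
        rcases eq_or_lt_of_le hmx with e | e
        · exact e ▸ hTm
        · exact lf (cr hTm hxy e hx (by grind)) hTm hx
      have := hmax y (lf hxc hxy (by grind))
      omega
    · subst hx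
      have := hmax y hxy
      omega
    · have hTM : T c M := by grind
      have hcx : T c x := by
        rcases eq_or_lt_of_le h1 with e | e
        · exact e ▸ hTM
        · exact cr hTM hxy hx e h2
      have := hmax y (tr hcx hxy)
      omega
  · have := bd hxy
    by_contra hcon
    have hyM : y ≤ M := by grind
    have hxc : T x c := by
      rcases lt_trichotomy y c with hy | hy | hy
      · have hTm : T m c := by grind
        rcases eq_or_lt_of_le h2 with e | e
        · exact tr hxy (e ▸ hTm)
        · exact tr (cr hxy hTm h1 e hy) hTm
      · exact hy ▸ hxy
      · have hTM : T c M := by grind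
        rcases eq_or_lt_of_le hyM with e | e
        · exact rt (e ▸ hxy) hTM (by grind)
        · exact cr hxy hTM (by grind) hy e
    have := hmin x hxc
    omega

/-- If `[a, b)` contains no gap under no arc of `T`, and does not separate two gaps under the same
arcs of `T`, then `(a, b)` is an arc of `T`. Otherwise, if the block of `a` ends before `b`, the two
gaps around its hull are under the same arcs and only the one on the right is in `[a, b)`; if the
block of `a` extends past `b`, then of the two gaps around the hull of the block of `b` only the one
on the left is in `[a, b)`. -/
theorem IsNC.of_not_separated {T : ℕ → ℕ → Prop} (h : IsNC 0 (n + 1) T) {a b : ℕ} (hab : a < b)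
    (hbn : b ≤ n)
    (H₁ : ∀ i < n, (∀ x y, T x y → ¬(x ≤ i ∧ i < y)) → ¬(a ≤ i ∧ i < b))
    (H₂ : ∀ i j, j ≤ i → i < n → (∀ x y, T x y → ((x ≤ i ∧ i < y) ↔ (x ≤ j ∧ j < y))) →
      ((a ≤ i ∧ i < b) ↔ (a ≤ j ∧ j < b))) : T a b := by
  by_contra hT
  -- a gap is numbered by the point on its left, so the gap before `m` is `m - 1`
  obtain ⟨m, M, hma, haM, hm, hM, hmax, hull⟩ := h.exists_hull a
  rcases lt_trichotomy M b with hMb | hMb | hMb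
  · rcases Nat.eq_zero_or_pos m with h0 | h0
    · -- there is no gap before `0`; in this case no arc covers the gap after `M`
      refine H₁ M (by omega) (fun x y hxy hc => ?_) ⟨haM, hMb⟩
      have := (hull x y hxy).1 hc
      omega
    · have := H₂ M (m - 1) (by omega) (by omega) (fun x y hxy => by
        rw [hull x y hxy]; omega)
      omega
  · grind
  · -- the block of `a` extends past `b`, so the hull `[m', M']` of the block of `b` is nested
    -- strictly inside `(a, M)`
    obtain ⟨m', M', hmb', hbM', hm', hM', hmax', hull'⟩ := h.exists_hull b
    obtain ⟨bd, tr, lf, rt, cr⟩ := h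
    have haM' : T a M := by grind
    have hMn := (bd haM').2.2
    have h1 : a < m' := by
      rcases hm' with e | e
      · omega
      · by_contra hlt
        rcases eq_or_lt_of_le (not_lt.1 hlt) with e' | e'
        · exact hT (e' ▸ e)
        · exact hT (lf (cr e haM' e' hab hMb) e hab)
    have h2 : M' < M := by
      rcases hM' with e | e
      · omega
      · by_contra hlt
        rcases eq_or_lt_of_le (not_lt.1 hlt) with e' | e'
        · exact hT (rt haM' (e' ▸ e) hab)
        · exact hT (cr haM' e hab hMb e')
    have := H₂ M' (m' - 1) (by omega) (by omega) (fun x y hxy => by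
        rw [hull' x y hxy]; omega)
    omega

/-! ### The thick subcategory of a noncrossing partition -/

/-- The class of representations cut out by a set `T` of arcs: those which vanish at every index
under no arc, and whose structure map between two indices under the same arcs is bijective. -/
def thickOf (n : ℕ) (T : ℕ → ℕ → Prop) : Set (FinDimRep n) :=
  {X | (∀ (i : (Fin n)ᵒᵖ) (_ : ∀ a b, T a b → ¬Mem a b i),
      X ∈ {X : FinDimRep n | Subsingleton (X.1.obj i)}) ∧
    ∀ (i j : (Fin n)ᵒᵖ) (u : i ⟶ j) (_ : ∀ a b, T a b → (Mem a b i ↔ Mem a b j)),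
      X ∈ {X : FinDimRep n | Function.Bijective (X.1.map u).hom}}

theorem isThick_thickOf (T : ℕ → ℕ → Prop) : IsThick (thickOf n T) := by
  have h₁ := isThick_forall fun i : (Fin n)ᵒᵖ =>
    isThick_forall fun _ : ∀ a b, T a b → ¬Mem a b i => isThick_zeroAt i
  have h₂ := isThick_forall fun i : (Fin n)ᵒᵖ => isThick_forall fun j : (Fin n)ᵒᵖ =>
    isThick_forall fun u : i ⟶ j =>
      isThick_forall fun _ : ∀ a b, T a b → (Mem a b i ↔ Mem a b j) => isThick_isoAt u
  have h := isThick_forall (κ := Bool) (S := fun k => cond k _ _) (Bool.rec h₂ h₁)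
  convert h using 1
  ext X
  exact ⟨fun hX => Bool.rec hX.2 hX.1, fun hX => ⟨hX true, hX false⟩⟩

theorem arcs_thickOf {T : ℕ → ℕ → Prop} (h : IsNC 0 (n + 1) T) : arcs (thickOf n T) = T := by
  funext a b
  apply propext
  constructor
  · rintro ⟨hab, hbn, h₁, h₂⟩
    refine h.of_not_separated hab hbn ?_ ?_
    · intro i hi hT hc
      have hsub : Subsingleton (propSpace (Mem a b (Opposite.op (⟨i, hi⟩ : Fin n)))) :=
        h₁ (Opposite.op ⟨i, hi⟩) hT
      exact propOne_ne_zero (p := Mem a b (Opposite.op (⟨i, hi⟩ : Fin n))) hc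
        (Subsingleton.elim _ _)
    · intro i j hji hi hT
      exact iff_of_propMap_bijective (h₂ (Opposite.op ⟨i, hi⟩) (Opposite.op ⟨j, hji.trans_lt hi⟩)
        (homOfLE (show (⟨j, hji.trans_lt hi⟩ : Fin n) ≤ ⟨i, hi⟩ from hji)).op hT)
  · intro hT
    obtain ⟨-, hab, hbn⟩ := h.bound hT
    refine ⟨hab, Nat.le_of_lt_succ hbn, ?_, ?_⟩
    · intro i hi
      exact ⟨fun x y => (propSpace_eq_zero (hi a b hT) x).trans
        (propSpace_eq_zero (hi a b hT) y).symm⟩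
    · intro i j u hij
      exact ⟨propMap_injective (hij a b hT).1, propMap_surjective (hij a b hT).2⟩

/-! ### Decomposition into interval modules -/

/-- The structure map `X i → X j` for `j ≤ i`. -/
def structMap (X : RepCat n) {i j : (Fin n)ᵒᵖ} (h : j.unop ≤ i.unop) : X.obj i →ₗ[F2] X.obj j :=
  (X.map (homOfLE h).op).hom

theorem structMap_eq (X : RepCat n) {i j : (Fin n)ᵒᵖ} (u : i ⟶ j) :
    (X.map u).hom = structMap X (leOfHom u.unop) := rfl

theorem structMap_self (X : RepCat n) {i : (Fin n)ᵒᵖ} (x : X.obj i) :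
    structMap X (le_refl i.unop) x = x := by
  have : (homOfLE (le_refl i.unop)).op = 𝟙 i := rfl
  unfold structMap
  rw [this, X.map_id]
  rfl

theorem structMap_structMap (X : RepCat n) {i j k : (Fin n)ᵒᵖ} (h : j.unop ≤ i.unop)
    (h' : k.unop ≤ j.unop) (x : X.obj i) :
    structMap X h' (structMap X h x) = structMap X (h'.trans h) x := by
  have : (homOfLE (h'.trans h)).op = (homOfLE h).op ≫ (homOfLE h').op := rfl
  unfold structMap
  rw [this, X.map_comp]
  rfl

/-- A nonzero representation `X` has an interval module as a retract. Let `t` be the largest index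
with `X t ≠ 0`, let `v ∈ X t` be nonzero, and let `s` be the smallest index at which the image of
`v` is nonzero. Sending generators to the images of `v` gives `M[s, t + 1) ⟶ X`; a functional on
`X s` with value `1` on the image of `v` extends to a retraction, because `X` vanishes
beyond `t`. -/
theorem exists_retract (X : FinDimRep n) {i₀ : (Fin n)ᵒᵖ} (h₀ : ¬Subsingleton (X.1.obj i₀)) :
    ∃ (a b : ℕ) (_ : a < b) (_ : b ≤ n) (s : (intervalRep n a b).1 ⟶ X.1)
      (r : X.1 ⟶ (intervalRep n a b).1), s ≫ r = 𝟙 _ := by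
  classical
  obtain ⟨t, ht, hmax⟩ : ∃ t : Fin n, ¬Subsingleton (X.1.obj (Opposite.op t)) ∧
      ∀ i : (Fin n)ᵒᵖ, t < i.unop → Subsingleton (X.1.obj i) := by
    obtain ⟨t, ht⟩ := Set.Finite.exists_maximal
      (s := {i : Fin n | ¬Subsingleton (X.1.obj (Opposite.op i))}) (Set.toFinite _)
      ⟨i₀.unop, h₀⟩
    refine ⟨t, ht.1, fun i hi => ?_⟩
    by_contra hcon
    exact absurd (ht.2 (y := i.unop) hcon hi.le) (not_le.2 hi)
  have : Nontrivial (X.1.obj (Opposite.op t)) := not_subsingleton_iff_nontrivial.1 ht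
  obtain ⟨v, hv⟩ := exists_ne (0 : X.1.obj (Opposite.op t))
  -- the images of `v` under the structure maps
  let w : ∀ i : (Fin n)ᵒᵖ, X.1.obj i := fun i =>
    if h : i.unop ≤ t then structMap X.1 (i := Opposite.op t) h v else 0
  have hw : ∀ {i : (Fin n)ᵒᵖ} (h : i.unop ≤ t), w i = structMap X.1 (i := Opposite.op t) h v :=
    fun h => dif_pos h
  have hww : ∀ {i j : (Fin n)ᵒᵖ} (h : j.unop ≤ i.unop) (_ : i.unop ≤ t),
      structMap X.1 h (w i) = w j := fun h hi => by
    rw [hw hi, hw (h.trans hi), structMap_structMap]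
  obtain ⟨s, hs, hmin⟩ : ∃ s : Fin n, (s ≤ t ∧ w (Opposite.op s) ≠ 0) ∧
      ∀ i : (Fin n)ᵒᵖ, i.unop < s → w i = 0 := by
    obtain ⟨s, hs⟩ := Set.Finite.exists_minimal
      (s := {i : Fin n | i ≤ t ∧ w (Opposite.op i) ≠ 0}) (Set.toFinite _)
      ⟨t, le_rfl, by rw [hw (le_refl t)]; rwa [structMap_self]⟩
    refine ⟨s, hs.1, fun i hi => ?_⟩
    by_contra hcon
    exact absurd (hs.2 (y := i.unop) ⟨hi.le.trans hs.1.1, hcon⟩ hi.le) (not_le.2 hi)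
  obtain ⟨hst, hws⟩ := hs
  obtain ⟨φ, hφ⟩ := Module.Projective.exists_dual_eq_one F2 hws
  -- the functional `φ` on `X s`, pulled back to all `X i` with `i ≥ s`
  let ψ : ∀ i : (Fin n)ᵒᵖ, X.1.obj i →ₗ[F2] F2 := fun i =>
    if h : s ≤ i.unop then φ ∘ₗ structMap X.1 (j := Opposite.op s) h else 0
  have hψ : ∀ {i : (Fin n)ᵒᵖ} (h : s ≤ i.unop),
      ψ i = φ ∘ₗ structMap X.1 (j := Opposite.op s) h := fun h => dif_pos h
  have hψ0 : ∀ {i : (Fin n)ᵒᵖ}, ¬Mem s.1 (t.1 + 1) i → ∀ x, ψ i x = 0 := by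
    intro i hi x
    by_cases h : s ≤ i.unop
    · have hti : t < i.unop := by
        by_contra hcon
        exact hi ⟨h, Nat.lt_succ_of_le (not_lt.1 hcon)⟩
      have := hmax i hti
      rw [Subsingleton.elim x 0, map_zero]
    · simp only [ψ, dif_neg h, LinearMap.zero_apply]
  refine ⟨s.1, t.1 + 1, Nat.lt_succ_of_le hst, t.2,
    { app := fun i => ModuleCat.ofHom
        ((LinearMap.toSpanSingleton F2 _ (w i)) ∘ₗ (propSpace (Mem s.1 (t.1 + 1) i)).subtype)
      naturality := ?_ },
    { app := fun i => ModuleCat.ofHom (LinearMap.codRestrict _ (ψ i) fun x hi => hψ0 hi x)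
      naturality := ?_ }, ?_⟩
  · intro i j u
    refine ModuleCat.hom_ext (LinearMap.ext fun (x : propSpace (Mem s.1 (t.1 + 1) i)) => ?_)
    change (propMap (Mem s.1 (t.1 + 1) i) (Mem s.1 (t.1 + 1) j) x).1 • w j =
      (X.1.map u).hom (x.1 • w i)
    by_cases hi : Mem s.1 (t.1 + 1) i
    · have hit : i.unop ≤ t := Nat.le_of_lt_succ hi.2
      have hji : j.unop ≤ i.unop := leOfHom u.unop
      rw [map_smul, structMap_eq, hww hji hit]
      by_cases hj : Mem s.1 (t.1 + 1) j
      · rw [propMap_of_true hj]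
      · have : j.unop < s := by
          by_contra hcon
          exact hj ⟨not_lt.1 hcon, Nat.lt_succ_of_le (hji.trans hit)⟩
        rw [hmin j this, smul_zero, smul_zero]
    · rw [propSpace_eq_zero hi x, map_zero]
      simp
  · intro i j u
    have hji : j.unop ≤ i.unop := leOfHom u.unop
    refine ModuleCat.hom_ext (LinearMap.ext fun y => Subtype.ext ?_)
    change ψ j ((X.1.map u).hom y) = (propMap (Mem s.1 (t.1 + 1) i) (Mem s.1 (t.1 + 1) j)
      ⟨ψ i y, fun hi => hψ0 hi y⟩).1
    by_cases hj : Mem s.1 (t.1 + 1) j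
    · have hsj : s ≤ j.unop := hj.1
      rw [propMap_of_true hj, hψ hsj, structMap_eq]
      change _ = ψ i y
      rw [hψ (hsj.trans hji)]
      exact congrArg φ (structMap_structMap _ _ _ _)
    · rw [hψ0 hj, propSpace_eq_zero hj (propMap _ _ _)]
      rfl
  · ext i x
    change propSpace (Mem s.1 (t.1 + 1) i) at x
    refine Subtype.ext ?_
    change ψ i (x.1 • w i) = x.1
    by_cases hi : Mem s.1 (t.1 + 1) i
    · have hsi : s ≤ i.unop := hi.1
      have hit : i.unop ≤ t := Nat.le_of_lt_succ hi.2
      rw [map_smul, hψ hsi, LinearMap.comp_apply, hww (j := Opposite.op s) hsi hit, hφ,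
        smul_eq_mul, mul_one]
    · rw [hψ0 hi, propSpace_eq_zero hi x]
      rfl

/-- The total dimension of a representation. -/
def totalDim (X : FinDimRep n) : ℕ :=
  ∑ i : Fin n, Module.finrank F2 (X.1.obj (Opposite.op i))

/-- A nonzero representation splits off an interval module, leaving a representation of smaller
dimension. -/
theorem exists_split (X : FinDimRep n) {i₀ : (Fin n)ᵒᵖ} (h₀ : ¬Subsingleton (X.1.obj i₀)) :
    ∃ (a b : ℕ) (_ : a < b) (_ : b ≤ n) (K : FinDimRep n),
      Nonempty (X.1 ≅ K.1 ⊞ (intervalRep n a b).1) ∧ totalDim K < totalDim X := by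
  obtain ⟨a, b, hab, hbn, s, r, hsr⟩ := exists_retract X h₀
  have hmono := (mono_iff_injective_app (kernel.ι r)).1 inferInstance
  have hfin := X.2
  let K : FinDimRep n := ⟨kernel r, fun i =>
    Module.Finite.of_injective _ (hmono i)⟩
  have hex := ShortComplex.exact_kernel r
  let σ : (ShortComplex.mk (kernel.ι r) r (kernel.condition r)).Splitting :=
    ShortComplex.Splitting.ofExactOfSection _ hex s hsr inferInstance
  refine ⟨a, b, hab, hbn, K, ⟨σ.isoBinaryBiproduct⟩, ?_⟩
  refine Finset.sum_lt_sum (fun i _ => LinearMap.finrank_le_finrank_of_injective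
    (hmono (Opposite.op i))) ⟨⟨a, hab.trans_le hbn⟩, Finset.mem_univ _, ?_⟩
  -- the index `a` lies in the support of `M[a, b)`
  set i : (Fin n)ᵒᵖ := Opposite.op ⟨a, hab.trans_le hbn⟩
  have hi : Mem a b i := ⟨le_rfl, hab⟩
  have hne : LinearMap.range ((kernel.ι r).app i).hom ≠ ⊤ := by
    intro htop
    have h1 : (s.app i).hom (propOne hi) ∈ LinearMap.range ((kernel.ι r).app i).hom := by
      rw [htop]; trivial
    have h2 := (exact_hom_of_exact hex i _).2 h1
    have h3 := congrArg (fun t : (intervalRep n a b).1 ⟶ (intervalRep n a b).1 =>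
      (t.app i).hom (propOne hi)) hsr
    exact propOne_ne_zero hi (h3.symm.trans h2)
  have := Submodule.finrank_lt hne
  rwa [LinearMap.finrank_range_of_inj (hmono i)] at this

/-- A thick subcategory is determined by its interval modules: by induction on the total dimension
`m`, every object of `S` is a direct sum of interval modules, all of them in `S`. -/
theorem subset_of_arcs {S S' : Set (FinDimRep n)} (hS : IsThick S) (hS' : IsThick S')
    (h : ∀ a b, arcs S a b → arcs S' a b) (m : ℕ) :
    ∀ X : FinDimRep n, totalDim X = m → X ∈ S → X ∈ S' := by
  induction m using Nat.strong_induction_on with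
  | _ m ih =>
    intro X hX hXS
    by_cases h₀ : ∀ i, Subsingleton (X.1.obj i)
    · refine hS'.2.1 X ?_
      rw [(jointlyReflect_evaluation n).isZero_iff]
      intro i
      have := h₀ i
      exact ModuleCat.isZero_of_subsingleton (X.1.obj i)
    · push Not at h₀
      obtain ⟨i₀, h₀⟩ := h₀
      obtain ⟨a, b, hab, hbn, K, e, hlt⟩ := exists_split X (not_subsingleton_iff_nontrivial.2 h₀)
      obtain ⟨hK, hI⟩ := hS.2.2.2.1 _ _ _ hXS e
      exact hS'.2.2.1 _ _ _ (ih _ (hX ▸ hlt) K rfl hK) (h a b ⟨hab, hbn, hI⟩).2.2 e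

theorem arcs_injective {S S' : Set (FinDimRep n)} (hS : IsThick S) (hS' : IsThick S')
    (h : arcs S = arcs S') : S = S' :=
  Set.Subset.antisymm
    (fun X hX => subset_of_arcs hS hS' (fun _ _ hab => h ▸ hab) _ X rfl hX)
    (fun X hX => subset_of_arcs hS' hS (fun _ _ hab => h ▸ hab) _ X rfl hX)

/-! ### The bijection and the count -/

theorem card_thick_subcategories (n : ℕ) (hn : 1 ≤ n) :
    Nat.card {S : Set (FinDimRep n) //
      IsoClosed S ∧ ContainsZero S ∧ SumClosed S ∧ SummandClosed S ∧
        KerClosed S ∧ CokerClosed S ∧ ExtClosed S} = catalan (n + 1) := by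
  let F : {S : Set (FinDimRep n) // IsThick S} → {T // IsNC 0 (n + 1) T} :=
    fun S => ⟨arcs S.1, isNC_arcs S.2⟩
  have hF : Function.Bijective F := by
    constructor
    · rintro ⟨S, hS⟩ ⟨S', hS'⟩ h
      exact Subtype.ext (arcs_injective hS hS' (congrArg Subtype.val h))
    · rintro ⟨T, hT⟩
      exact ⟨⟨thickOf n T, isThick_thickOf T⟩, Subtype.ext (arcs_thickOf hT)⟩
  exact (Nat.card_congr (Equiv.ofBijective F hF)).trans (card_NC (n + 1) 0 (n + 1) rfl).2
end
end

section
/- For n ≥ 1, the number of classes of objects of the category of contravariant representations of {1,…,n} over F₂ with finite-dimensional values that are closed under isomorphism, contain the zero object, and are closed under finite direct sums, direct summands, and quotient objects equals (n+1)!. -/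
/-!
A contravariant representation of `{1,…,n}` is a chain `X₁ ← X₂ ← ⋯ ← Xₙ`; its indecomposables are
the interval representations `[c,d]`, and `[c,d]` is generated in degree `d`.

For a choice of thresholds `h d ∈ {0,…,d+1}` (indices start at `0`), let `S_h` be the class of
representations that have no epimorphism onto any `[c,d]` with `c < h d` (`thresholdClass`). Closure
of `S_h` under isomorphism, summands and quotients is immediate. It is closed under sums because
`[c,d]` is generated in degree `d` by a one-dimensional space: a morphism to `[c,d]` is epi exactly
when it is nonzero in degree `d` (`epi_iff`), so if `X ⊞ Y ⟶ [c,d]` is epi, then its restriction to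
`X` or to `Y` is already epi. The only epimorphisms between intervals are `[c,d] ⟶ [c',d]` with
`c ≤ c'` (`eq_and_le_of_epi`, `exists_epi`), so `[c,d] ∈ S_h` iff `h d ≤ c`, and `h` is determined
by `S_h`.

Conversely, for a class `S` with the required closure properties, the intervals `[c,d] ∈ S` with `d`
fixed are those with `c` above some threshold `h d`, and `S = S_h`. The inclusion `S_h ⊆ S` rests on
decomposing representations into intervals: if `d` is maximal with `X_d ≠ 0` and `c` is minimal with
`X_d → X_c` nonzero, then `[c,d]` is a direct summand of `X` (`exists_retract`), and one inducts on
the total dimension. Hence the classes correspond to tuples of thresholds, of which there are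
`∏ (d + 2) = (n + 1)!`.
-/

open CategoryTheory CategoryTheory.Limits

noncomputable section

variable {n : ℕ}

namespace IntervalRep

open Opposite

/-! ### Representations as chains of vector spaces -/

/-- The structure map `X_j → X_i` of a representation, for `i ≤ j`. -/
def res (X : RepCat n) {i j : Fin n} (h : i ≤ j) : X.obj (op j) →ₗ[F2] X.obj (op i) :=
  (X.map (homOfLE h).op).hom

/-- The component of a morphism of representations at an index. -/
def at_ {X Y : RepCat n} (f : X ⟶ Y) (i : Fin n) : X.obj (op i) →ₗ[F2] Y.obj (op i) :=
  (f.app (op i)).hom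

lemma res_refl (X : RepCat n) (i : Fin n) (x : X.obj (op i)) : res X (le_refl i) x = x := by
  simp [res]

lemma res_res (X : RepCat n) {i j k : Fin n} (h : i ≤ j) (h' : j ≤ k) (x : X.obj (op k)) :
    res X h (res X h' x) = res X (h.trans h') x := by
  have : (homOfLE (h.trans h')).op = (homOfLE h').op ≫ (homOfLE h).op := Subsingleton.elim _ _
  simp [res, this]

lemma at_res {X Y : RepCat n} (f : X ⟶ Y) {i j : Fin n} (h : i ≤ j) (x : X.obj (op j)) :
    at_ f i (res X h x) = res Y h (at_ f j x) := by
  simp [res, at_]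

/-- A morphism of representations from its components. -/
def mkHom {X Y : RepCat n} (g : ∀ i : Fin n, X.obj (op i) →ₗ[F2] Y.obj (op i))
    (hg : ∀ (i j : Fin n) (h : i ≤ j) (x : X.obj (op j)), g i (res X h x) = res Y h (g j x)) :
    X ⟶ Y where
  app i := ModuleCat.ofHom (g i.unop)
  naturality i j f := by
    ext x
    have := hg j.unop i.unop (leOfHom f.unop) x
    have hf : f = (homOfLE (leOfHom f.unop)).op := Subsingleton.elim _ _
    rw [hf]
    simpa [res] using this

@[simp] lemma at_mkHom {X Y : RepCat n} (g : ∀ i : Fin n, X.obj (op i) →ₗ[F2] Y.obj (op i)) (hg)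
    (i : Fin n) : at_ (mkHom (X := X) (Y := Y) g hg) i = g i := rfl

lemma at_comp {X Y Z : RepCat n} (f : X ⟶ Y) (g : Y ⟶ Z) (i : Fin n) (x : X.obj (op i)) :
    at_ (f ≫ g) i x = at_ g i (at_ f i x) := by
  simp [at_]

lemma hom_ext {X Y : RepCat n} {f g : X ⟶ Y} (h : ∀ i x, at_ f i x = at_ g i x) : f = g := by
  ext i x
  exact h i.unop x

lemma epi_iff_surjective {X Y : RepCat n} (f : X ⟶ Y) :
    Epi f ↔ ∀ i, Function.Surjective (at_ f i) := by
  rw [NatTrans.epi_iff_epi_app]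
  constructor
  · intro h i
    exact (ModuleCat.epi_iff_surjective _).1 (h (op i))
  · intro h i
    exact (ModuleCat.epi_iff_surjective _).2 (h i.unop)

lemma injective_of_mono {X Y : RepCat n} (f : X ⟶ Y) [Mono f] (i : Fin n) :
    Function.Injective (at_ f i) :=
  (ModuleCat.mono_iff_injective _).1 ((NatTrans.mono_iff_mono_app f).1 inferInstance (op i))

/-! ### Interval representations -/

/-- The interval representation `[c,d]`: one-dimensional in the degrees `c ≤ i ≤ d`, zero elsewhere.
Its value at `i` is encoded as the functions to `F2` on the proofs of `c ≤ i ∧ i ≤ d`. -/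
def I (c d : Fin n) : RepCat n where
  obj i := ModuleCat.of F2 (PLift (c ≤ i.unop ∧ i.unop ≤ d) → F2)
  map {i j} _ := ModuleCat.ofHom
    { toFun := fun v _ => open Classical in
        if hi : c ≤ i.unop ∧ i.unop ≤ d then v ⟨hi⟩ else 0
      map_add' := fun v w => by
        funext _
        by_cases hi : c ≤ i.unop ∧ i.unop ≤ d <;> simp [hi]
      map_smul' := fun a v => by
        funext _
        by_cases hi : c ≤ i.unop ∧ i.unop ≤ d <;> simp [hi] }
  map_id i := by
    refine ModuleCat.hom_ext (LinearMap.ext fun v => funext fun p => ?_)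
    simp [p.down]
  map_comp {i j k} f g := by
    refine ModuleCat.hom_ext (LinearMap.ext fun v => funext fun p => ?_)
    by_cases hi : c ≤ i.unop ∧ i.unop ≤ d
    · have hj : c ≤ j.unop ∧ j.unop ≤ d :=
        ⟨p.down.1.trans (leOfHom g.unop), (leOfHom f.unop).trans hi.2⟩
      simp [hi, hj]
    · simp [hi]

/-- The underlying function of an element of `[c,d]` in degree `i`. -/
def val {c d i : Fin n} (v : (I c d).obj (op i)) : PLift (c ≤ i ∧ i ≤ d) → F2 := v

lemma val_ext {c d i : Fin n} {v w : (I c d).obj (op i)}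
    (h : ∀ hi : c ≤ i ∧ i ≤ d, val v ⟨hi⟩ = val w ⟨hi⟩) : v = w :=
  funext fun p => h p.down

lemma eq_zero_of_not {c d i : Fin n} (h : ¬ (c ≤ i ∧ i ≤ d)) (v : (I c d).obj (op i)) : v = 0 :=
  val_ext fun hi => absurd hi h

lemma val_res {c d i j : Fin n} (h : i ≤ j) (v : (I c d).obj (op j))
    (hi : c ≤ i ∧ i ≤ d) (hj : c ≤ j ∧ j ≤ d) : val (res (I c d) h v) ⟨hi⟩ = val v ⟨hj⟩ := by
  change dite _ _ _ = _
  exact dif_pos hj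

instance (c d : Fin n) (i : (Fin n)ᵒᵖ) : FiniteDimensional F2 ((I c d).obj i) :=
  inferInstanceAs (FiniteDimensional F2 (PLift (c ≤ i.unop ∧ i.unop ≤ d) → F2))

/-- The interval `[c,d]` as an object of `FinDimRep n`. -/
def J (c d : Fin n) : FinDimRep n := ⟨I c d, fun _ => inferInstance⟩

/-- The basis vector of `[c,d]` in degree `i` (equal to zero if `i` is not in `[c,d]`). -/
def gen (c d i : Fin n) : (I c d).obj (op i) := fun _ => (1 : F2)

lemma val_gen {c d i : Fin n} (hi : c ≤ i ∧ i ≤ d) : val (gen c d i) ⟨hi⟩ = 1 := rfl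

lemma F2_eq_one {a : F2} (h : a ≠ 0) : a = 1 := by
  revert a; decide

/-- Over `F₂`, the only nonzero vector of `[c,d]` in degree `i` is the basis vector. -/
lemma eq_gen {c d i : Fin n} {v : (I c d).obj (op i)} (h : v ≠ 0) : v = gen c d i := by
  refine val_ext fun hi => F2_eq_one fun h0 => h (val_ext fun _ => h0)

lemma gen_ne_zero {c d i : Fin n} (hi : c ≤ i ∧ i ≤ d) : gen c d i ≠ 0 := fun h => by
  have := val_gen hi
  rw [h] at this
  exact zero_ne_one this

lemma res_gen {c d i j : Fin n} (h : i ≤ j) (hj : j ≤ d) :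
    res (I c d) h (gen c d j) = gen c d i :=
  val_ext fun hi => val_res h _ hi ⟨hi.1.trans h, hj⟩

/-- As `[c,d]` is generated by a one-dimensional space in degree `d`, a morphism to `[c,d]` is epi
as soon as it is nonzero in that degree. -/
lemma epi_iff {X : RepCat n} {c d : Fin n} (hcd : c ≤ d) (f : X ⟶ I c d) :
    Epi f ↔ ∃ x, at_ f d x ≠ 0 := by
  rw [epi_iff_surjective]
  constructor
  · intro h
    obtain ⟨x, hx⟩ := h d (gen c d d)
    exact ⟨x, by rw [hx]; exact gen_ne_zero ⟨hcd, le_rfl⟩⟩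
  · rintro ⟨x, hx⟩ i v
    by_cases hv : v = 0
    · exact ⟨0, by rw [hv, map_zero]⟩
    · have hi : c ≤ i ∧ i ≤ d := by
        by_contra h
        exact hv (eq_zero_of_not h v)
      refine ⟨res X hi.2 x, ?_⟩
      rw [at_res, eq_gen hx, eq_gen hv, res_gen _ le_rfl]

/-! ### Morphisms to and from intervals -/

/-- The morphism `X ⟶ [c,d]` given by a functional on `X_c` that vanishes on the images of the `X_i`
with `i > d`. -/
def toI {X : RepCat n} (c d : Fin n) (φ : X.obj (op c) →ₗ[F2] F2)
    (hφ : ∀ (i : Fin n) (hi : c ≤ i), d < i → ∀ x, φ (res X hi x) = 0) : X ⟶ I c d :=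
  mkHom
    (fun i =>
      { toFun := fun x => (fun p => φ (res X p.down.1 x) : PLift (c ≤ i ∧ i ≤ d) → F2)
        map_add' := fun x y => by simp only [map_add]; rfl
        map_smul' := fun a x => by simp only [map_smul]; rfl })
    (fun i j h x => val_ext fun hi => by
      by_cases hj : c ≤ j ∧ j ≤ d
      · rw [val_res h _ hi hj]
        change φ _ = φ _
        rw [res_res]
      · rw [eq_zero_of_not hj (LinearMap.mk _ _ x), map_zero]
        change φ _ = 0
        rw [res_res]
        exact hφ j _ (lt_of_not_ge fun h' => hj ⟨hi.1.trans h, h'⟩) x)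

lemma val_toI {X : RepCat n} {c d : Fin n} (φ : X.obj (op c) →ₗ[F2] F2) (hφ)
    (i : Fin n) (x : X.obj (op i)) (hi : c ≤ i ∧ i ≤ d) :
    val (at_ (toI c d φ hφ) i x) ⟨hi⟩ = φ (res X hi.1 x) := rfl

/-- The morphism `[c,d] ⟶ X` given by an element of `X_d` that vanishes in all degrees below `c`. -/
def ofI {X : RepCat n} (c d : Fin n) (x : X.obj (op d))
    (hx : ∀ (i : Fin n) (hi : i ≤ d), i < c → res X hi x = 0) : I c d ⟶ X :=
  mkHom
    (fun i =>
      { toFun := fun v => open Classical in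
          if hi : c ≤ i ∧ i ≤ d then val v ⟨hi⟩ • res X hi.2 x else 0
        map_add' := fun v w => by
          by_cases hi : c ≤ i ∧ i ≤ d
          · simp only [hi, and_self, dite_true]
            exact add_smul _ _ _
          · simp [hi]
        map_smul' := fun a v => by
          by_cases hi : c ≤ i ∧ i ≤ d
          · simp only [hi, and_self, dite_true]
            exact mul_smul _ _ _
          · simp [hi] })
    (fun i j h v => by
      by_cases hj : c ≤ j ∧ j ≤ d
      · by_cases hi : c ≤ i ∧ i ≤ d
        · simp [hi, hj, val_res h v hi hj, res_res]
        · have hic : i < c := lt_of_not_ge fun h' => hi ⟨h', h.trans hj.2⟩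
          simp [hi, hj, res_res, hx i (h.trans hj.2) hic]
      · rw [eq_zero_of_not hj v, map_zero, map_zero, map_zero, map_zero])

lemma at_ofI {X : RepCat n} {c d : Fin n} (x : X.obj (op d)) (hx)
    (i : Fin n) (v : (I c d).obj (op i)) (hi : c ≤ i ∧ i ≤ d) :
    at_ (ofI c d x hx) i v = val v ⟨hi⟩ • res X hi.2 x := by
  change dite _ _ _ = _
  exact dif_pos hi

lemma exists_epi {c c' d : Fin n} (h : c ≤ c') (h' : c' ≤ d) : ∃ f : I c d ⟶ I c' d, Epi f := by
  refine ⟨ofI c d (gen c' d d) ?_, (epi_iff h' _).2 ⟨gen c d d, ?_⟩⟩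
  · intro i hi hic
    exact eq_zero_of_not (fun h'' => absurd (h.trans h''.1) (not_le.2 hic)) _
  · rw [at_ofI _ _ _ _ ⟨h.trans h', le_rfl⟩, val_gen, one_smul, res_refl]
    exact gen_ne_zero ⟨h', le_rfl⟩

lemma eq_and_le_of_epi {c d c' d' : Fin n} (h' : c' ≤ d') (f : I c d ⟶ I c' d')
    (hf : Epi f) : d = d' ∧ c ≤ c' := by
  obtain ⟨x, hx⟩ := (epi_iff h' f).1 hf
  have hx0 : x ≠ 0 := fun h => hx (by rw [h, map_zero])
  have hd : c ≤ d' ∧ d' ≤ d := by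
    by_contra h
    exact hx0 (eq_zero_of_not h x)
  have hdd : d = d' := by
    by_contra hne
    have hlt : d' < d := lt_of_le_of_ne hd.2 (Ne.symm hne)
    -- `x` extends to degree `d`, where the target vanishes
    apply hx
    rw [eq_gen hx0, ← res_gen hd.2 le_rfl, at_res,
      eq_zero_of_not (fun h => absurd h.2 (not_le.2 hlt)) (at_ f d (gen c d d)), map_zero]
  refine ⟨hdd, ?_⟩
  by_contra hc
  have hvanish : at_ f c' (res _ h' x) = 0 := by
    rw [eq_zero_of_not (fun h => hc h.1) (res _ h' x), map_zero]
  rw [at_res, eq_gen hx, res_gen _ le_rfl] at hvanish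
  exact gen_ne_zero ⟨le_rfl, h'⟩ hvanish

/-! ### Splitting off an interval -/

/-- A nonzero representation has an interval as a retract. Here `d` is maximal with `X_d ≠ 0`,
`c` is minimal with `X_d → X_c` nonzero, the inclusion is given by an `x ∈ X_d` with nonzero image in
`X_c`, and the retraction by a functional on `X_c` that is `1` on this image. -/
lemma exists_retract (X : RepCat n) (i₀ : Fin n) (x₀ : X.obj (op i₀)) (hx₀ : x₀ ≠ 0) :
    ∃ (c d : Fin n) (s : I c d ⟶ X) (r : X ⟶ I c d), c ≤ d ∧ s ≫ r = 𝟙 _ := by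
  classical
  obtain ⟨d, ⟨y, hy⟩, hd⟩ := (wellFounded_gt (α := Fin n)).has_min
    {i | ∃ x : X.obj (op i), x ≠ 0} ⟨i₀, x₀, hx₀⟩
  obtain ⟨c, ⟨hcd, x, hx⟩, hc⟩ := (wellFounded_lt (α := Fin n)).has_min
    {i | ∃ (h : i ≤ d) (x : X.obj (op d)), res X h x ≠ 0} ⟨d, le_rfl, y, by rwa [res_refl]⟩
  obtain ⟨φ, hφ⟩ := Module.Projective.exists_dual_eq_one F2 hx
  refine ⟨c, d, ofI c d x ?_, toI c d φ ?_, hcd, ?_⟩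
  · intro i hi hic
    by_contra h
    exact hc i ⟨hi, x, h⟩ hic
  · intro i hi hdi z
    have hz : z = 0 := by
      by_contra h
      exact hd i ⟨z, h⟩ hdi
    rw [hz, map_zero, map_zero]
  · refine hom_ext fun i v => val_ext fun hi => ?_
    rw [at_comp, val_toI, at_ofI _ _ _ _ hi, map_smul, map_smul, res_res, hφ, smul_eq_mul, mul_one]
    simp [at_]

/-- The total dimension of a representation. -/
def dim (X : FinDimRep n) : ℕ := ∑ i : Fin n, Module.finrank F2 (X.1.obj (op i))

/-- A representation in `FinDimRep n` is zero or splits off an interval. -/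
lemma isZero_or_exists_iso (X : FinDimRep n) :
    IsZero X.1 ∨ ∃ (c d : Fin n) (K : FinDimRep n), c ≤ d ∧ dim K < dim X ∧
      Nonempty (X.1 ≅ (J c d).1 ⊞ K.1) := by
  by_cases h : ∃ (i : Fin n) (x : X.1.obj (op i)), x ≠ 0
  · right
    obtain ⟨i₀, x₀, hx₀⟩ := h
    obtain ⟨c, d, s, r, hcd, hsr⟩ := exists_retract X.1 i₀ x₀ hx₀
    have hinj := injective_of_mono (kernel.ι r)
    have hfd (i : Fin n) : FiniteDimensional F2 (X.1.obj (op i)) := X.2 (op i)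
    have : IsSplitEpi r := ⟨⟨s, hsr⟩⟩
    let K : FinDimRep n := ⟨kernel r, fun i =>
      have := hfd i.unop
      FiniteDimensional.of_injective _ (hinj i.unop)⟩
    refine ⟨c, d, K, hcd, ?_, ?_⟩
    · refine Finset.sum_lt_sum (fun i _ => LinearMap.finrank_le_finrank_of_injective (hinj i))
        ⟨d, Finset.mem_univ _, ?_⟩
      by_contra hle
      have hfdK : FiniteDimensional F2 (K.1.obj (op d)) := K.2 (op d)
      have heq := le_antisymm (LinearMap.finrank_le_finrank_of_injective (hinj d)) (not_lt.1 hle)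
      have hsurj := (LinearMap.injective_iff_surjective_of_finrank_eq_finrank heq).1 (hinj d)
      obtain ⟨x, hx⟩ := (epi_iff hcd r).1 inferInstance
      obtain ⟨k, rfl⟩ := hsurj x
      apply hx
      rw [← at_comp, kernel.condition]
      rfl
    · have hb := isBilimitBinaryBiconeOfIsSplitEpiOfKernel (kernelIsKernel r)
      exact ⟨biprod.uniqueUpToIso _ _ hb ≪≫ biprod.braiding _ _⟩
  · left
    push Not at h
    rw [IsZero.iff_id_eq_zero]
    exact hom_ext fun i x => by rw [h i x, map_zero, map_zero]

/-! ### Classes given by thresholds -/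

/-- The class of representations that have no epimorphism onto an interval `[c,d]` with
`c < h d`. Thresholds range over `0, …, d + 1`; for `h d = d + 1` no interval ending in `d` lies in
the class. -/
def thresholdClass (h : ∀ d : Fin n, Fin (d.val + 2)) : Set (FinDimRep n) :=
  {X | ∀ c d : Fin n, c ≤ d → c.val < (h d).val → ∀ f : X.1 ⟶ I c d, ¬ Epi f}

lemma thresholdClass_quotClosed (h : ∀ d : Fin n, Fin (d.val + 2)) :
    QuotClosed (thresholdClass h) := by
  rintro X Y hX ⟨p, hp⟩ c d hcd hc f hf
  exact hX c d hcd hc (p ≫ f) (epi_comp p f)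

lemma thresholdClass_isoClosed (h : ∀ d : Fin n, Fin (d.val + 2)) :
    IsoClosed (thresholdClass h) := by
  rintro X Y ⟨e⟩ hX
  exact thresholdClass_quotClosed h X Y hX ⟨e.hom, inferInstance⟩

lemma thresholdClass_containsZero (h : ∀ d : Fin n, Fin (d.val + 2)) :
    ContainsZero (thresholdClass h) := by
  intro X hX c d hcd _ f hf
  obtain ⟨x, hx⟩ := (epi_iff hcd f).1 hf
  rw [hX.eq_of_src f 0] at hx
  exact hx rfl

lemma thresholdClass_summandClosed (h : ∀ d : Fin n, Fin (d.val + 2)) :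
    SummandClosed (thresholdClass h) := by
  rintro X Y Z hZ ⟨e⟩
  exact ⟨thresholdClass_quotClosed h Z X hZ ⟨e.hom ≫ biprod.fst, inferInstance⟩,
    thresholdClass_quotClosed h Z Y hZ ⟨e.hom ≫ biprod.snd, inferInstance⟩⟩

lemma thresholdClass_sumClosed (h : ∀ d : Fin n, Fin (d.val + 2)) :
    SumClosed (thresholdClass h) := by
  rintro X Y Z hX hY ⟨e⟩ c d hcd hc f hf
  -- in degree `d`, `f` is nonzero on the image of `X` or on the image of `Y`
  obtain ⟨z, hz⟩ := (epi_iff hcd f).1 hf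
  have hdec : f = (e.hom ≫ biprod.fst) ≫ (biprod.inl ≫ e.inv ≫ f) +
      (e.hom ≫ biprod.snd) ≫ (biprod.inr ≫ e.inv ≫ f) := by
    rw [← cancel_epi e.inv]
    refine biprod.hom_ext' _ _ ?_ ?_ <;> simp
  have hadd : at_ f d z = at_ (biprod.inl ≫ e.inv ≫ f) d (at_ (e.hom ≫ biprod.fst) d z) +
      at_ (biprod.inr ≫ e.inv ≫ f) d (at_ (e.hom ≫ biprod.snd) d z) := by
    rw [← at_comp, ← at_comp]
    conv_lhs => rw [hdec]
    rfl
  by_cases hl : at_ (biprod.inl ≫ e.inv ≫ f) d (at_ (e.hom ≫ biprod.fst) d z) = 0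
  · rw [hl, zero_add] at hadd
    exact hY c d hcd hc _ ((epi_iff hcd _).2 ⟨_, hadd ▸ hz⟩)
  · exact hX c d hcd hc _ ((epi_iff hcd _).2 ⟨_, hl⟩)

lemma J_mem_thresholdClass (h : ∀ d : Fin n, Fin (d.val + 2)) {c d : Fin n} (hcd : c ≤ d) :
    J c d ∈ thresholdClass h ↔ (h d).val ≤ c.val := by
  constructor
  · intro hJ
    by_contra hlt
    have hid : Epi (𝟙 (I c d)) := inferInstance
    exact hJ c d hcd (not_le.1 hlt) (𝟙 (I c d)) hid
  · intro hle c' d' hcd' hlt f hf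
    obtain ⟨rfl, hcc⟩ := eq_and_le_of_epi hcd' f hf
    exact absurd (hle.trans hcc) (not_le.2 hlt)

lemma thresholdClass_injective :
    Function.Injective (thresholdClass (n := n)) := by
  -- if `h d < k d`, then `[h d, d]` lies in the class of `h` only
  have key (h k : ∀ d : Fin n, Fin (d.val + 2)) (heq : thresholdClass h = thresholdClass k)
      (d : Fin n) : (k d).val ≤ (h d).val := by
    by_contra hlt
    have hk := (k d).isLt
    have hd := d.isLt
    let c : Fin n := ⟨(h d).val, by omega⟩
    have hcd : c ≤ d := Fin.le_def.2 (by simp only [c]; omega)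
    have hJ := (J_mem_thresholdClass h hcd).2 le_rfl
    rw [heq, J_mem_thresholdClass k hcd] at hJ
    exact hlt hJ
  intro h k heq
  funext d
  exact Fin.ext (le_antisymm (key k h heq.symm d) (key h k heq d))

/-! ### Every class is given by thresholds -/

/-- The intervals `[c,d]` in a quotient-closed class, for fixed `d`, are those with `c` above a
threshold. -/
lemma exists_threshold {S : Set (FinDimRep n)} (hq : QuotClosed S) (d : Fin n) :
    ∃ t : Fin (d.val + 2), ∀ c : Fin n, c ≤ d → (J c d ∈ S ↔ t.val ≤ c.val) := by
  classical
  have hex : ∃ m : ℕ, m = d.val + 1 ∨ ∃ c : Fin n, c.val = m ∧ c ≤ d ∧ J c d ∈ S :=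
    ⟨_, Or.inl rfl⟩
  refine ⟨⟨Nat.find hex, Nat.lt_succ_of_le (Nat.find_min' hex (Or.inl rfl))⟩, fun c hcd => ?_⟩
  constructor
  · intro hc
    exact Nat.find_min' hex (Or.inr ⟨c, rfl, hcd, hc⟩)
  · intro hle
    have hcd' := Fin.le_def.1 hcd
    rcases Nat.find_spec hex with hm | ⟨c', hm, -, hc'⟩
    · simp only at hle
      omega
    · have : c' ≤ c := Fin.le_def.2 (hm.trans_le hle)
      exact hq _ _ hc' (exists_epi this hcd)

/-- If `S` contains all intervals of `thresholdClass h`, then it contains the whole class, by splitting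
off intervals and induction on the total dimension. -/
lemma thresholdClass_subset {S : Set (FinDimRep n)} (hzero : ContainsZero S) (hsum : SumClosed S)
    (h : ∀ d : Fin n, Fin (d.val + 2))
    (hh : ∀ c d : Fin n, c ≤ d → (h d).val ≤ c.val → J c d ∈ S) : thresholdClass h ⊆ S := by
  intro X
  induction hN : dim X using Nat.strong_induction_on generalizing X with
  | _ N ih =>
    intro hX
    rcases isZero_or_exists_iso X with h0 | ⟨c, d, K, hcd, hlt, ⟨e⟩⟩
    · exact hzero X h0
    · obtain ⟨hJ, hK⟩ := thresholdClass_summandClosed h _ _ _ hX ⟨e⟩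
      exact hsum _ _ _ (hh c d hcd ((J_mem_thresholdClass h hcd).1 hJ))
        (ih _ (hN ▸ hlt) rfl hK) ⟨e⟩

lemma exists_eq_thresholdClass {S : Set (FinDimRep n)} (hzero : ContainsZero S)
    (hsum : SumClosed S) (hq : QuotClosed S) :
    ∃ h : ∀ d : Fin n, Fin (d.val + 2), thresholdClass h = S := by
  choose h hh using exists_threshold hq
  refine ⟨h, Set.Subset.antisymm
    (thresholdClass_subset hzero hsum h fun c d hcd => (hh d c hcd).2) ?_⟩
  intro X hX c d hcd hc f hf
  exact absurd ((hh d c hcd).1 (hq X (J c d) hX ⟨f, hf⟩)) (not_le.2 hc)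

end IntervalRep

theorem card_quotient_closed_subcategories (n : ℕ) (hn : 1 ≤ n) :
    Nat.card {S : Set (FinDimRep n) //
      IsoClosed S ∧ ContainsZero S ∧ SumClosed S ∧ SummandClosed S ∧ QuotClosed S} =
      Nat.factorial (n + 1) := by
  let F : (∀ d : Fin n, Fin (d.val + 2)) → {S : Set (FinDimRep n) //
      IsoClosed S ∧ ContainsZero S ∧ SumClosed S ∧ SummandClosed S ∧ QuotClosed S} := fun h =>
    ⟨IntervalRep.thresholdClass h, IntervalRep.thresholdClass_isoClosed h,
      IntervalRep.thresholdClass_containsZero h, IntervalRep.thresholdClass_sumClosed h,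
      IntervalRep.thresholdClass_summandClosed h, IntervalRep.thresholdClass_quotClosed h⟩
  have hF : Function.Bijective F := by
    constructor
    · intro h k heq
      exact IntervalRep.thresholdClass_injective (congrArg Subtype.val heq)
    · rintro ⟨S, -, hzero, hsum, -, hq⟩
      obtain ⟨h, hh⟩ := IntervalRep.exists_eq_thresholdClass hzero hsum hq
      exact ⟨h, Subtype.ext hh⟩
  rw [← Nat.card_eq_of_bijective F hF, Nat.card_pi]
  simp only [Nat.card_eq_fintype_card, Fintype.card_fin]
  rw [Fin.prod_univ_eq_prod_range (fun d => d + 2) n, ← Finset.prod_range_add_one_eq_factorial,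
    Finset.prod_range_succ']
  simp
end
end
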